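/- For n ≥ 3, the volume of the n-dimensional hemicube hγ_n, defined as the convex hull of the 2^{n−1} points (1/2)(±1, ±1, …, ±1) with an even number of minus signs, equals 1 − 2^{n−1}/n!. -/

import Mathlib

open MeasureTheory Set

namespace Hemicube

variable {ι : Type*} [DecidableEq ι]

/-- The sign vector which is `-1` exactly on `S`. -/
def sgn (S : Finset ι) (i : ι) : ℝ := if i ∈ S then -1 else 1

/-- The vertex of the cube `[-1/2, 1/2]^ι` whose negative coordinates are those in `S`. -/
noncomputable def vertex (S : Finset ι) (i : ι) : ℝ := sgn S i / 2

/-- Reflection of the coordinates not in `S`, followed by a translation by `c`. -/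
def reflect (c : ℝ) (S : Finset ι) (x : ι → ℝ) (i : ι) : ℝ := c - sgn S i * x i

lemma sgn_eq (S : Finset ι) (i : ι) : sgn S i = 1 ∨ sgn S i = -1 := by
  unfold sgn; split_ifs <;> simp

lemma reflect_vertex (S T : Finset ι) (i : ι) :
    reflect (1 / 2) S (vertex T) i = if i ∈ symmDiff S T then 1 else 0 := by
  simp only [reflect, sgn, vertex, Finset.mem_symmDiff]
  split_ifs <;> first | tauto | norm_num

lemma even_card_symmDiff (S T : Finset ι) :
    Even (symmDiff S T).card ↔ (Even S.card ↔ Even T.card) := by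
  have h := Finset.card_sdiff_add_card_inter S T
  have h' := Finset.card_sdiff_add_card_inter T S
  rw [Finset.inter_comm] at h'
  rw [symmDiff_def, Finset.sup_eq_union, Finset.card_union_of_disjoint disjoint_sdiff_sdiff]
  simp only [Nat.even_iff]
  omega

/-- The convex hull of the vertices of the cube with an even number of negative coordinates. -/
def hemicube (ι : Type*) [DecidableEq ι] : Set (ι → ℝ) :=
  convexHull ℝ (vertex '' {S : Finset ι | Even S.card})

lemma hemicube_subset :
    hemicube ι ⊆ univ.pi (fun _ ↦ Icc (-(1 / 2)) (1 / 2)) := by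
  refine convexHull_min ?_ (convex_pi fun _ _ ↦ convex_Icc _ _)
  rintro _ ⟨S, -, rfl⟩ i -
  rcases sgn_eq S i with h | h <;> norm_num [vertex, h]

lemma measurePreserving_reflect [Fintype ι] (c : ℝ) (S : Finset ι) :
    MeasurePreserving (reflect c S) := by
  refine volume_preserving_pi (f := fun i t ↦ c - sgn S i * t) fun i ↦ ?_
  rcases sgn_eq S i with h | h
  · simpa [h] using Measure.measurePreserving_sub_left volume c
  · simpa [h] using measurePreserving_add_left volume c

/-- The open simplex cut off from the positive orthant by the sum of coordinates being `1`. -/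
def openCorner (ι : Type*) [Fintype ι] : Set (ι → ℝ) := {x | (∀ i, 0 < x i) ∧ ∑ i, x i < 1}

variable [Fintype ι]

omit [DecidableEq ι] in
lemma measurableSet_openCorner : MeasurableSet (openCorner ι) := by
  refine IsOpen.measurableSet ?_
  simp only [openCorner, ofPred_and, ofPred_forall]
  exact (isOpen_iInter_of_finite fun i ↦ isOpen_lt continuous_const (continuous_apply i)).inter
    (isOpen_lt (by fun_prop) continuous_const)

lemma volume_reflect_preimage (c : ℝ) (S : Finset ι) :
    volume (reflect c S ⁻¹' openCorner ι) = volume (openCorner ι) :=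
  (measurePreserving_reflect c S).measure_preimage measurableSet_openCorner.nullMeasurableSet

lemma crossPolytope_ae_eq :
    {x : ι → ℝ | ∑ i, |x i| < 1} =ᵐ[volume]
      ⋃ S : Finset ι, reflect 0 S ⁻¹' openCorner ι := by
  have h0 : ∀ᵐ x : ι → ℝ, ∀ i, x i ≠ 0 :=
    ae_all_iff.2 fun i ↦ Measure.ae_eval_ne (μ := fun _ : ι ↦ (volume : Measure ℝ)) i 0
  filter_upwards [h0] with x hx
  refine propext ?_
  change (∑ i, |x i| < 1) ↔ x ∈ ⋃ S : Finset ι, reflect 0 S ⁻¹' openCorner ι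
  simp only [mem_iUnion, mem_preimage, openCorner, mem_ofPred_eq]
  constructor
  · intro h
    have habs : ∀ i, reflect 0 (Finset.univ.filter fun i ↦ 0 < x i) x i = |x i| := by
      intro i
      rcases lt_or_gt_of_ne (hx i) with hi | hi
      · simp [reflect, sgn, hi.le.not_gt, abs_of_neg hi]
      · simp [reflect, sgn, hi, abs_of_pos hi]
    refine ⟨Finset.univ.filter fun i ↦ 0 < x i, fun i ↦ ?_, ?_⟩
    · rw [habs]; exact abs_pos.2 (hx i)
    · simpa only [habs] using h
  · rintro ⟨S, hpos, hsum⟩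
    convert hsum using 2 with i
    rw [← abs_of_pos (hpos i)]
    rcases sgn_eq S i with h | h <;> simp [reflect, h]

lemma disjoint_reflect_zero {S T : Finset ι} (h : S ≠ T) :
    Disjoint (reflect 0 S ⁻¹' openCorner ι) (reflect 0 T ⁻¹' openCorner ι) := by
  rw [Set.disjoint_left]
  rintro x ⟨hS, -⟩ ⟨hT, -⟩
  refine h (Finset.ext fun i ↦ ?_)
  have h1 := hS i
  have h2 := hT i
  simp only [reflect, sgn] at h1 h2
  split_ifs at h1 h2 <;> first | tauto | linarith

omit [DecidableEq ι] in
lemma volume_openCorner :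
    volume (openCorner ι) = ENNReal.ofReal (1 / (Fintype.card ι).factorial) := by
  classical
  have h1 := volume_sum_rpow_lt_one ι (p := 1) le_rfl
  simp only [Real.rpow_one, div_one, Real.Gamma_nat_eq_factorial] at h1
  have h2 : Real.Gamma (1 + 1) = 1 := by norm_num
  rw [h2, mul_one, measure_congr crossPolytope_ae_eq,
    measure_iUnion (fun S T h ↦ disjoint_reflect_zero h)
      (fun S ↦ (measurePreserving_reflect 0 S).measurable measurableSet_openCorner)] at h1
  simp only [volume_reflect_preimage, tsum_fintype, Finset.sum_const, Finset.card_univ,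
    Fintype.card_finset, nsmul_eq_mul] at h1
  rw [div_eq_mul_one_div, ENNReal.ofReal_mul (by positivity)] at h1
  have h3 : ENNReal.ofReal ((2 : ℝ) ^ Fintype.card ι) = ((2 ^ Fintype.card ι : ℕ) : ENNReal) := by
    rw [← ENNReal.ofReal_natCast]; norm_num
  rw [h3] at h1
  exact (ENNReal.mul_right_inj (by simp) (by simp)).1 h1

omit [DecidableEq ι] in
lemma card_odd_finset [Nonempty ι] :
    (Finset.univ.filter fun S : Finset ι ↦ Odd S.card).card = 2 ^ (Fintype.card ι - 1) := by
  have h1 := Finset.sum_powerset_neg_one_pow_card_of_nonempty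
    (Finset.univ_nonempty (α := ι))
  have h2 := Finset.card_filter_add_card_filter_not (s := (Finset.univ : Finset (Finset ι)))
    (fun S : Finset ι ↦ Odd S.card)
  rw [Finset.powerset_univ, ← Finset.sum_filter_add_sum_filter_not _
    (fun S : Finset ι ↦ Odd S.card),
    Finset.sum_congr rfl (g := fun _ ↦ -1) (fun S hS ↦ (Finset.mem_filter.1 hS).2.neg_one_pow),
    Finset.sum_congr (s₁ := Finset.filter _ _) rfl (g := fun _ ↦ 1) (fun S hS ↦
      (Nat.not_odd_iff_even.1 (Finset.mem_filter.1 hS).2).neg_one_pow)] at h1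
  simp only [Finset.sum_const, Finset.card_univ, Fintype.card_finset, mul_neg, mul_one,
    nsmul_eq_mul] at h1 h2
  have h3 : 2 ^ Fintype.card ι = 2 * 2 ^ (Fintype.card ι - 1) := by
    rw [← pow_succ', Nat.sub_add_cancel Fintype.card_pos]
  omega

lemma disjoint_reflect_half {S T : Finset ι} (hS : Odd S.card) (hT : Odd T.card) (h : S ≠ T) :
    Disjoint (reflect (1 / 2) S ⁻¹' openCorner ι) (reflect (1 / 2) T ⁻¹' openCorner ι) := by
  rw [Set.disjoint_left]
  rintro x ⟨hS0, hS1⟩ ⟨hT0, hT1⟩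
  have hc : 2 ≤ (symmDiff S T).card := by
    have h1 : (symmDiff S T).card ≠ 0 := by
      simpa [Finset.card_eq_zero, ← Finset.bot_eq_empty] using h
    have h2 : Even (symmDiff S T).card := by
      rw [even_card_symmDiff]; simp [Nat.not_even_iff_odd.2 hS, Nat.not_even_iff_odd.2 hT]
    obtain ⟨k, hk⟩ := h2
    omega
  have h3 : ∑ i ∈ symmDiff S T, (reflect (1 / 2) S x i + reflect (1 / 2) T x i)
      = (symmDiff S T).card := by
    rw [Finset.card_eq_sum_ones, Nat.cast_sum]
    refine Finset.sum_congr rfl fun i hi ↦ ?_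
    simp only [reflect, sgn]
    rw [Finset.mem_symmDiff] at hi
    split_ifs <;> first | tauto | (push_cast; ring)
  have h4 : ∑ i ∈ symmDiff S T, (reflect (1 / 2) S x i + reflect (1 / 2) T x i)
      ≤ ∑ i, (reflect (1 / 2) S x i + reflect (1 / 2) T x i) :=
    Finset.sum_le_sum_of_subset_of_nonneg (Finset.subset_univ _)
      fun i _ _ ↦ (add_pos (hS0 i) (hT0 i)).le
  rw [Finset.sum_add_distrib (s := Finset.univ), h3] at h4
  have h5 : (2 : ℝ) ≤ (symmDiff S T).card := by exact_mod_cast hc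
  linarith

lemma isClosed_hemicube : IsClosed (hemicube ι) :=
  (Set.toFinite _).isClosed_convexHull ℝ

lemma one_le_sum_reflect {S : Finset ι} (hS : Odd S.card) {x : ι → ℝ} (hx : x ∈ hemicube ι) :
    1 ≤ ∑ i, reflect (1 / 2) S x i := by
  suffices h : hemicube ι ⊆ {x | ∑ i, sgn S i * x i ≤ Fintype.card ι * (1 / 2) - 1} by
    have := h hx
    simp only [mem_ofPred_eq, reflect, Finset.sum_sub_distrib, Finset.sum_const,
      Finset.card_univ, nsmul_eq_mul] at this ⊢
    linarith
  refine convexHull_min ?_ (convex_halfSpace_le ?_ _)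
  · rintro _ ⟨T, hT, rfl⟩
    have h1 : ∑ i, reflect (1 / 2) S (vertex T) i = (symmDiff S T).card := by
      simp only [reflect_vertex, Finset.sum_ite_mem, Finset.univ_inter, Finset.sum_const,
        nsmul_eq_mul, mul_one]
    have h2 : 0 < (symmDiff S T).card := by
      rcases Nat.eq_zero_or_pos (symmDiff S T).card with h | h
      · have := (even_card_symmDiff S T).1 (by simp [h])
        exact absurd (this.2 hT) (Nat.not_even_iff_odd.2 hS)
      · exact h
    have h3 : (1 : ℝ) ≤ (symmDiff S T).card := by exact_mod_cast h2
    simp only [reflect, Finset.sum_sub_distrib, Finset.sum_const, Finset.card_univ,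
      nsmul_eq_mul] at h1
    simp only [mem_ofPred_eq]
    linarith
  · exact ⟨fun x y ↦ by simp [mul_add, Finset.sum_add_distrib],
      fun c x ↦ by simp [Finset.mul_sum, mul_left_comm]⟩

lemma mem_hemicube [Nonempty ι] {x : ι → ℝ} (hx : ∀ i, x i ∈ Icc (-(1 / 2) : ℝ) (1 / 2))
    (h : ∀ S : Finset ι, Odd S.card → 1 ≤ ∑ i, reflect (1 / 2) S x i) :
    x ∈ hemicube ι := by
  by_contra hxn
  obtain ⟨f, u, hf, hu⟩ := geometric_hahn_banach_closed_point (convex_convexHull ℝ _)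
    isClosed_hemicube hxn
  set c : ι → ℝ := fun i ↦ f (Pi.single i 1) with hc
  have hfc : ∀ y, f y = ∑ i, c i * y i := fun y ↦ by
    conv_lhs => rw [pi_eq_sum_univ' y]
    simp [hc, mul_comm, Pi.single]
  set T : Finset ι := Finset.univ.filter fun i ↦ c i < 0 with hT
  have hcT : ∀ i, c i = sgn T i * |c i| := fun i ↦ by
    by_cases hi : c i < 0
    · simp [sgn, hT, hi, abs_of_neg hi]
    · simp [sgn, hT, hi, abs_of_nonneg (not_lt.1 hi)]
  have hw : ∀ S : Finset ι, ∀ i, 0 ≤ reflect (1 / 2) S x i := fun S i ↦ by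
    obtain ⟨h1, h2⟩ := hx i
    rcases sgn_eq S i with h | h <;> simp only [reflect, h] <;> linarith
  -- the loss of `f` at `y` against its maximum over the cube
  have key : ∀ y, f y = ∑ i, |c i| / 2 - ∑ i, |c i| * reflect (1 / 2) T y i := fun y ↦ by
    rw [hfc, ← Finset.sum_sub_distrib]
    refine Finset.sum_congr rfl fun i _ ↦ ?_
    rw [reflect]
    linear_combination y i * hcT i
  have hmem : ∀ S : Finset ι, Even S.card → f (vertex S) < f x := fun S hS ↦
    (hf _ (subset_convexHull ℝ _ ⟨S, hS, rfl⟩)).trans hu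
  rcases Nat.even_or_odd T.card with hTe | hTo
  · have h1 := hmem T hTe
    rw [key, key x] at h1
    have h2 : 0 ≤ ∑ i, |c i| * reflect (1 / 2) T x i :=
      Finset.sum_nonneg fun i _ ↦ mul_nonneg (abs_nonneg _) (hw T i)
    simp only [reflect_vertex, symmDiff_self, Finset.bot_eq_empty, Finset.notMem_empty, if_false,
      mul_zero, Finset.sum_const_zero] at h1
    linarith
  · obtain ⟨j, hj⟩ := Finite.exists_min (fun i ↦ |c i|)
    have hsd : symmDiff T (symmDiff T {j}) = {j} := symmDiff_symmDiff_cancel_left T {j}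
    have h1 := hmem (symmDiff T {j}) (by
      rw [even_card_symmDiff]; simp [Nat.not_even_iff_odd.2 hTo])
    rw [key, key x] at h1
    simp only [reflect_vertex, hsd, Finset.mem_singleton, mul_ite, mul_one, mul_zero,
      Finset.sum_ite_eq', Finset.mem_univ, if_true] at h1
    have h2 : |c j| * ∑ i, reflect (1 / 2) T x i ≤ ∑ i, |c i| * reflect (1 / 2) T x i := by
      rw [Finset.mul_sum]
      exact Finset.sum_le_sum fun i _ ↦ mul_le_mul_of_nonneg_right (hj i) (hw T i)
    nlinarith [h T hTo, abs_nonneg (c j)]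

lemma hemicube_ae_eq [Nonempty ι] :
    hemicube ι =ᵐ[volume] (univ.pi (fun _ : ι ↦ Icc (-(1 / 2) : ℝ) (1 / 2)) \
      ⋃ S ∈ Finset.univ.filter (fun S : Finset ι ↦ Odd S.card),
        reflect (1 / 2) S ⁻¹' openCorner ι : Set (ι → ℝ)) := by
  have h0 : ∀ᵐ x : ι → ℝ, ∀ i, x i ≠ 1 / 2 ∧ x i ≠ -(1 / 2) :=
    ae_all_iff.2 fun i ↦
      (Measure.ae_eval_ne (μ := fun _ : ι ↦ (volume : Measure ℝ)) i _).and
        (Measure.ae_eval_ne (μ := fun _ : ι ↦ (volume : Measure ℝ)) i _)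
  filter_upwards [h0] with x hx
  refine propext ?_
  change x ∈ hemicube ι ↔ x ∈ (_ \ _ : Set (ι → ℝ))
  simp only [mem_sdiff, mem_iUnion, mem_preimage, Finset.mem_filter, Finset.mem_univ, true_and,
    not_exists]
  constructor
  · exact fun h ↦ ⟨hemicube_subset h, fun S hS hx' ↦ hx'.2.not_ge (one_le_sum_reflect hS h)⟩
  · rintro ⟨hcube, hcor⟩
    refine mem_hemicube (fun i ↦ hcube i trivial) fun S hS ↦ not_lt.1 fun hlt ↦
      hcor S hS ⟨fun i ↦ ?_, hlt⟩
    obtain ⟨h1, h2⟩ := hcube i trivial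
    have h3 := h2.lt_of_ne (hx i).1
    have h4 := h1.lt_of_ne' (hx i).2
    rcases sgn_eq S i with h | h <;> simp only [reflect, h] <;> linarith

lemma reflect_preimage_subset (S : Finset ι) :
    reflect (1 / 2) S ⁻¹' openCorner ι ⊆ univ.pi (fun _ ↦ Icc (-(1 / 2)) (1 / 2)) := by
  rintro x ⟨hpos, hsum⟩ i -
  have h1 := Finset.single_le_sum (fun j _ ↦ (hpos j).le) (Finset.mem_univ i)
  have h2 := hpos i
  rcases sgn_eq S i with h | h <;> simp only [reflect, h] at h1 h2 hsum <;>
    constructor <;> linarith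

theorem volume_hemicube_pi [Nonempty ι] :
    volume (hemicube ι) =
      ENNReal.ofReal (1 - 2 ^ (Fintype.card ι - 1) / (Fintype.card ι).factorial) := by
  have hmeas : ∀ S : Finset ι, MeasurableSet (reflect (1 / 2) S ⁻¹' openCorner ι) := fun S ↦
    (measurePreserving_reflect _ S).measurable measurableSet_openCorner
  have hU : volume (⋃ S ∈ Finset.univ.filter (fun S : Finset ι ↦ Odd S.card),
      reflect (1 / 2) S ⁻¹' openCorner ι) =
      ENNReal.ofReal (2 ^ (Fintype.card ι - 1) / (Fintype.card ι).factorial) := by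
    rw [measure_biUnion_finset (fun S hS T hT hST ↦ disjoint_reflect_half
      (Finset.mem_filter.1 hS).2 (Finset.mem_filter.1 hT).2 hST) fun S _ ↦ hmeas S]
    simp only [volume_reflect_preimage, Finset.sum_const, card_odd_finset, volume_openCorner,
      nsmul_eq_mul]
    rw [← ENNReal.ofReal_natCast, ← ENNReal.ofReal_mul (by positivity)]
    congr 1
    push_cast
    ring
  rw [measure_congr hemicube_ae_eq, measure_sdiff (iUnion₂_subset fun S _ ↦
      reflect_preimage_subset S) (Finset.measurableSet_biUnion _ fun S _ ↦ hmeas S).nullMeasurableSet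
      (by rw [hU]; exact ENNReal.ofReal_ne_top), hU, volume_pi_pi,
    ENNReal.ofReal_sub _ (by positivity)]
  norm_num

end Hemicube


/-- For `n ≥ 3`, the volume of the hemicube `hγ_n`, the convex hull of the points
`(±1/2, …, ±1/2)` with an even number of minus signs, equals `1 - 2^(n-1)/n!`. -/
theorem volume_hemicube (n : ℕ) (hn : 3 ≤ n) :
    MeasureTheory.volume (convexHull ℝ
      {x : EuclideanSpace ℝ (Fin n) |
        (∀ i, x i = 1 / 2 ∨ x i = -(1 / 2)) ∧
        Even ({i : Fin n | x i = -(1 / 2)}.ncard)})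
    = ENNReal.ofReal (1 - (2 : ℝ) ^ (n - 1) / (n.factorial : ℝ)) := by
  have : Nonempty (Fin n) := ⟨⟨0, by omega⟩⟩
  have himage : WithLp.ofLp '' {x : EuclideanSpace ℝ (Fin n) |
      (∀ i, x i = 1 / 2 ∨ x i = -(1 / 2)) ∧ Even ({i : Fin n | x i = -(1 / 2)}.ncard)} =
      Hemicube.vertex '' {S : Finset (Fin n) | Even S.card} := by
    ext y
    constructor
    · rintro ⟨x, ⟨hx, hev⟩, rfl⟩
      refine ⟨Finset.univ.filter fun i ↦ x i = -(1 / 2), ?_, ?_⟩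
      · rw [mem_ofPred_eq, ← Set.ncard_coe_finset]
        simpa using hev
      · ext i
        rcases hx i with h | h <;> norm_num [Hemicube.vertex, Hemicube.sgn, h]
    · rintro ⟨S, hS, rfl⟩
      have hneg : ∀ i, Hemicube.vertex S i = -(1 / 2) ↔ i ∈ S := fun i ↦ by
        by_cases h : i ∈ S <;> norm_num [Hemicube.vertex, Hemicube.sgn, h]
      refine ⟨WithLp.toLp 2 (Hemicube.vertex S), ⟨fun i ↦ ?_, ?_⟩, rfl⟩
      · rcases Hemicube.sgn_eq S i with h | h <;> norm_num [Hemicube.vertex, h]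
      · simp only [hneg]
        simpa [← Set.ncard_coe_finset] using hS
  have hhull := (WithLp.linearEquiv 2 ℝ (Fin n → ℝ)).toLinearMap.image_convexHull
    {x : EuclideanSpace ℝ (Fin n) |
      (∀ i, x i = 1 / 2 ∨ x i = -(1 / 2)) ∧ Even ({i : Fin n | x i = -(1 / 2)}.ncard)}
  have hvol := (PiLp.volume_preserving_ofLp (Fin n)).measure_preimage
    Hemicube.isClosed_hemicube.measurableSet.nullMeasurableSet
  rw [Hemicube.volume_hemicube_pi, Fintype.card_fin] at hvol
  rw [← hvol, Hemicube.hemicube, ← himage]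
  congr 1
  rw [← Set.preimage_image_eq (convexHull ℝ _) (WithLp.ofLp_injective 2)]
  exact congrArg _ hhull
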